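/- Suppose n ≡ 3 (mod 4). If φ is an (n+1)/2-isometry of C_n fixing 0̄ that is not an even isometry, then one of the following three possibilities holds: (I) φ coincides on E with some even isometry, and there exist a σ_{i,j}-mapping τ and an even-weight word a such that φ coincides with T_a ∘ τ on O; (II) there is a σ_{i,j}-mapping τ such that φ coincides with τ on E, and φ coincides on O with some even isometry; (III) there exist a σ_{i,j}-mapping τ_1, a σ_{k,l}-mapping τ_2 and an even-weight word a such that φ coincides with τ_1 on E and with T_a ∘ τ_2 on O. -/

import Mathlib

/-- The `σ_{i,j}`-mapping of the Boolean cube `C_n` associated with coordinates `i, j` and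
a bijection `σ : {1,…,n} \ {i} → {1,…,n} \ {j}`. -/
def sigmaMap (n : ℕ) (i j : Fin n)
    (σ : {k : Fin n // k ≠ i} ≃ {k : Fin n // k ≠ j}) :
    (Fin n → ZMod 2) → Fin n → ZMod 2 :=
  fun c k => if h : k = j then c i else c (σ.symm ⟨k, h⟩).1 + c i

namespace CubeIso

abbrev W (n : ℕ) := Fin n → ZMod 2

/-- equality of folded distances -/
def R (n d d' : ℕ) : Prop := d' = d ∨ d' + d = n + 1

lemma z2 (a : ZMod 2) : a = 0 ∨ a = 1 := by
  revert a; decide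

lemma w_add_self {n : ℕ} (x : W n) : x + x = 0 := by
  funext i; exact CharTwo.add_self_eq_zero (x i)

lemma dist_eq {n : ℕ} (x y : W n) : hammingDist x y = hammingNorm (x + y) := by
  rw [hammingDist_eq_hammingNorm]
  congr 1
  funext i
  simp

lemma norm_cast_sum {n : ℕ} (x : W n) : ((hammingNorm x : ℕ) : ZMod 2) = ∑ i, x i := by
  unfold hammingNorm
  rw [Finset.card_filter]
  push_cast
  apply Finset.sum_congr rfl
  intro i _
  rcases z2 (x i) with h | h <;> simp [h]

lemma even_iff {n : ℕ} (x : W n) : Even (hammingNorm x) ↔ ∑ i, x i = 0 := by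
  rw [← norm_cast_sum, ZMod.natCast_eq_zero_iff_even]

lemma even_add {n : ℕ} (x y : W n) :
    Even (hammingNorm (x + y)) ↔ (Even (hammingNorm x) ↔ Even (hammingNorm y)) := by
  simp only [even_iff, Pi.add_apply, Finset.sum_add_distrib]
  rcases z2 (∑ i, x i) with h | h <;> rcases z2 (∑ i, y i) with h' | h' <;> rw [h, h'] <;> decide

lemma norm_add_one {n : ℕ} (x : W n) : hammingNorm (x + 1) + hammingNorm x = n := by
  unfold hammingNorm
  have := Finset.card_filter_add_card_filter_not (s := (Finset.univ : Finset (Fin n))) (fun i => x i = 0)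
  rw [Finset.card_univ, Fintype.card_fin] at this
  refine Eq.trans ?_ this
  congr 2
  ext i
  have h11 : (1 : ZMod 2) + 1 = 0 := by decide
  rcases z2 (x i) with h | h <;> simp [h, h11]

lemma norm_le {n : ℕ} (x : W n) : hammingNorm x ≤ n := by
  have := norm_add_one x; omega

lemma norm_add_single {n : ℕ} (x : W n) (k : Fin n) :
    (x k = 0 → hammingNorm (x + Pi.single k 1) = hammingNorm x + 1) ∧
    (x k = 1 → hammingNorm (x + Pi.single k 1) + 1 = hammingNorm x) := by
  have key : ∀ y : W n, y k = 0 → hammingNorm (y + Pi.single k 1) = hammingNorm y + 1 := by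
    intro y hy
    unfold hammingNorm
    have hk : k ∉ (Finset.univ.filter (fun i => y i ≠ 0)) := by simp [hy]
    rw [← Finset.card_insert_of_notMem hk]
    congr 1
    ext i
    by_cases h : i = k
    · subst h; simp [hy]
    · simp [h]
  refine ⟨key x, fun h => ?_⟩
  have := key (x + Pi.single k 1) (by simp [h]; decide)
  rw [add_assoc, w_add_self, add_zero] at this
  omega

/-- extended basis vectors -/
def B {n : ℕ} : Option (Fin n) → W n
  | none => 1
  | some k => Pi.single k 1

/-- extended coordinate -/
def ext {n : ℕ} (y : W n) : Option (Fin n) → ZMod 2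
  | none => 0
  | some k => y k

lemma flip {n m : ℕ} (hn : n = 4 * m + 3) (y : W n) (hy : Even (hammingNorm y))
    (u v : Option (Fin n)) (huv : u ≠ v) :
    R n (hammingNorm y) (hammingNorm (y + (B u + B v))) ↔ ext y u ≠ ext y v := by
  obtain ⟨r, hr⟩ := hy
  have hle := norm_le y
  have half : ∀ b : Fin n, R n (hammingNorm y) (hammingNorm (y + (Pi.single b 1 + 1))) ↔ y b ≠ 0 := by
    intro b
    have h1 := norm_add_single y b
    have h2 := norm_add_one (y + Pi.single b 1)
    rw [← add_assoc]
    unfold R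
    rcases z2 (y b) with h | h
    · have := h1.1 h
      simp [h]; omega
    · have := h1.2 h
      simp [h]; omega
  rcases u with _ | a <;> rcases v with _ | b
  · exact absurd rfl huv
  · simp only [B, ext]
    rw [add_comm 1, half, ne_comm]
  · simp only [B, ext]
    exact half a
  · have hab : b ≠ a := fun h => huv (by rw [h])
    simp only [B, ext]
    rw [← add_assoc]
    have h1 := norm_add_single y a
    have h2 := norm_add_single (y + Pi.single a 1) b
    have e : (y + Pi.single a 1 : W n) b = y b := by simp [hab]
    rw [e] at h2
    unfold R
    rcases z2 (y a) with h | h <;> rcases z2 (y b) with h' | h'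
    · have := h1.1 h
      have := h2.1 h'
      simp [h, h']; omega
    · have := h1.1 h
      have := h2.2 h'
      simp [h, h']; omega
    · have := h1.2 h
      have := h2.1 h'
      simp [h, h']; omega
    · have := h1.2 h
      have := h2.2 h'
      simp [h, h']; omega

lemma exists_pair {n : ℕ} (y : W n) (h : hammingNorm y = 2 ∨ hammingNorm y + 1 = n) :
    ∃ u v : Option (Fin n), u ≠ v ∧ y = B u + B v := by
  rcases h with h | h
  · unfold hammingNorm at h
    obtain ⟨a, b, hab, hs⟩ := Finset.card_eq_two.1 h
    refine ⟨some a, some b, by simpa using hab, ?_⟩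
    funext i
    have hi : y i ≠ 0 ↔ i = a ∨ i = b := by
      have := Finset.ext_iff.1 hs i
      simpa using this
    simp only [B, Pi.add_apply, Pi.single_apply]
    rcases z2 (y i) with h | h <;> simp only [h] at hi ⊢ <;> grind
  · have h1 := norm_add_one y
    have h2 : hammingNorm (y + 1) = 1 := by omega
    unfold hammingNorm at h2
    obtain ⟨a, hs⟩ := Finset.card_eq_one.1 h2
    refine ⟨none, some a, by simp, ?_⟩
    have : y + 1 = Pi.single a 1 := by
      funext i
      have hi : (y + 1) i ≠ 0 ↔ i = a := by
        have := Finset.ext_iff.1 hs i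
        simpa using this
      rw [Pi.single_apply]
      rcases z2 ((y + 1) i) with h | h <;> simp only [h] at hi ⊢ <;> grind
    simp only [B]
    rw [← this, add_comm y, ← add_assoc, w_add_self, zero_add]

lemma ext_B {n : ℕ} (u t t' : Option (Fin n)) :
    ext (B u) t + ext (B u) t' = (if t = u then 1 else 0) + (if t' = u then 1 else 0) := by
  have h11 : (1 : ZMod 2) + 1 = 0 := by decide
  rcases u with _ | a <;> rcases t with _ | b <;> rcases t' with _ | c <;>
    simp [ext, B, Pi.single_apply, h11]

lemma ext_add {n : ℕ} (x y : W n) (t : Option (Fin n)) : ext (x + y) t = ext x t + ext y t := by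
  cases t <;> simp [ext]

lemma ne_iff_add (a b : ZMod 2) : a ≠ b ↔ a + b = 1 := by
  revert a b; decide

lemma pair_meet {n : ℕ} (u v t t' : Option (Fin n)) (huv : u ≠ v) :
    ext (B u + B v) t ≠ ext (B u + B v) t' ↔ ¬ ((t = u ∨ t = v) ↔ (t' = u ∨ t' = v)) := by
  rw [ne_iff_add, ext_add, ext_add]
  have h1 := ext_B u t t'
  have h2 := ext_B v t t'
  have h11 : (1 : ZMod 2) + 1 = 0 := by decide
  have e : ext (B u) t + ext (B v) t + (ext (B u) t' + ext (B v) t') =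
    ((if t = u then 1 else 0) + (if t' = u then 1 else 0)) +
    ((if t = v then 1 else 0) + (if t' = v then 1 else 0)) := by
    rw [← h1, ← h2]; ring
  rw [e]
  by_cases a1 : t = u <;> by_cases a2 : t' = u <;> by_cases a3 : t = v <;> by_cases a4 : t' = v <;>
    simp_all

lemma star {n : ℕ} (hn : 4 ≤ n) {α : Type*} (P Q : Fin n → α) (hPQ : ∀ a, P a ≠ Q a)
    (h : ∀ a b, a ≠ b →
      ¬ ((P b = P a ∨ P b = Q a) ↔ (Q b = P a ∨ Q b = Q a))) :
    ∃ s, ∀ a, s = P a ∨ s = Q a := by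
  have core : ∀ s t r : α, ∀ a0 a1 : Fin n, a0 ≠ a1 → t ≠ r → s ≠ t → s ≠ r →
      ((P a0 = s ∧ Q a0 = t) ∨ (P a0 = t ∧ Q a0 = s)) →
      ((P a1 = s ∧ Q a1 = r) ∨ (P a1 = r ∧ Q a1 = s)) →
      ∀ a, s = P a ∨ s = Q a := by
    intro s t r a0 a1 h01 htr hst hsr e0 e1 c
    by_contra hc
    have hc0 : c ≠ a0 := by rintro rfl; grind
    have hc1 : c ≠ a1 := by rintro rfl; grind
    obtain ⟨d, hd⟩ : ∃ d : Fin n, d ∉ ({a0, a1, c} : Finset (Fin n)) := by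
      by_contra hall
      push Not at hall
      have h1 : (Finset.univ : Finset (Fin n)) ⊆ {a0, a1, c} := fun d _ => hall d
      have h2 := Finset.card_le_card h1
      have h3 := Finset.card_le_three (a := a0) (b := a1) (c := c)
      simp at h2
      omega
    simp only [Finset.mem_insert, Finset.mem_singleton, not_or] at hd
    obtain ⟨d0, d1, d2⟩ := hd
    have k0 := h a0 c (Ne.symm hc0)
    have k1 := h a1 c (Ne.symm hc1)
    have l0 := h a0 d (Ne.symm d0)
    have l1 := h a1 d (Ne.symm d1)
    have l2 := h c d (Ne.symm d2)
    have := hPQ c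
    have := hPQ d
    have hcc : (P c = t ∧ Q c = r) ∨ (P c = r ∧ Q c = t) := by
      clear l0 l1 l2
      grind
    clear k0 k1
    grind
  have h01 : (⟨0, by omega⟩ : Fin n) ≠ ⟨1, by omega⟩ := by simp
  generalize (⟨0, by omega⟩ : Fin n) = a0 at h01
  generalize (⟨1, by omega⟩ : Fin n) = a1 at h01
  have k := h a0 a1 h01
  have p0 := hPQ a0
  have p1 := hPQ a1
  by_cases c1 : P a1 = P a0
  · exact ⟨_, core (P a0) (Q a0) (Q a1) a0 a1 h01 (by grind) (by grind) (by grind) (by grind) (by grind)⟩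
  by_cases c2 : P a1 = Q a0
  · exact ⟨_, core (Q a0) (P a0) (Q a1) a0 a1 h01 (by grind) (by grind) (by grind) (by grind) (by grind)⟩
  by_cases c3 : Q a1 = P a0
  · exact ⟨_, core (P a0) (Q a0) (P a1) a0 a1 h01 (by grind) (by grind) (by grind) (by grind) (by grind)⟩
  · exact ⟨_, core (Q a0) (P a0) (P a1) a0 a1 h01 (by grind) (by grind) (by grind) (by grind) (by grind)⟩

lemma w_norm_one {n : ℕ} : hammingNorm (1 : W n) = n := by
  have := norm_add_one (0 : W n)
  simpa using this

lemma norm_T {n : ℕ} (a : Fin n) : hammingNorm (B none + B (some a) : W n) + 1 = n := by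
  have := (norm_add_single (1 : W n) a).2 rfl
  rw [w_norm_one] at this
  exact this

lemma main {n m : ℕ} (hn : n = 4 * m + 3) (hm : 1 ≤ m) (g : W n → W n) (g0 : g 0 = 0)
    (ginj : Function.Injective g)
    (hR : ∀ x y, Even (hammingNorm x) → Even (hammingNorm y) →
      R n (hammingNorm (x + y)) (hammingNorm (g x + g y))) :
    (∃ π : Equiv.Perm (Fin n), ∀ x, Even (hammingNorm x) → g x = fun k => x (π.symm k)) ∨
    (∃ (i j : Fin n) (σ : {k : Fin n // k ≠ i} ≃ {k : Fin n // k ≠ j}),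
      ∀ x, Even (hammingNorm x) → g x = sigmaMap n i j σ x) := by
  have hR0 : ∀ x, Even (hammingNorm x) → R n (hammingNorm x) (hammingNorm (g x)) := by
    intro x hx
    have := hR x 0 hx (by simp)
    rwa [g0, add_zero, add_zero] at this
  have gE : ∀ x, Even (hammingNorm x) → Even (hammingNorm (g x)) := by
    intro x hx
    have := hR0 x hx
    unfold R at this
    obtain ⟨r, hr⟩ := hx
    rw [Nat.even_iff]; omega
  set T : Fin n → W n := fun a => B none + B (some a) with hT
  have TE : ∀ a, Even (hammingNorm (T a)) := by
    intro a
    have := norm_T a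
    rw [Nat.even_iff]; simp only [hT]; omega
  have hp : ∀ a, ∃ u v : Option (Fin n), u ≠ v ∧ g (T a) = B u + B v := by
    intro a
    apply exists_pair
    have h1 := hR0 (T a) (TE a)
    have h2 := norm_T a
    unfold R at h1
    simp only [hT] at h1 ⊢
    omega
  choose P Q hPQ hg using hp
  have hTT : ∀ a b, a ≠ b → hammingNorm (T a + T b) = 2 := by
    intro a b hab
    have e : T a + T b = (0 + Pi.single a 1) + Pi.single b 1 := by
      simp only [hT, B]
      rw [zero_add]
      have := w_add_self (1 : W n)
      calc (1 : W n) + Pi.single a 1 + (1 + Pi.single b 1)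
          = (1 + 1) + (Pi.single a 1 + Pi.single b 1) := by abel
        _ = _ := by rw [this, zero_add]
    rw [e, (norm_add_single _ b).1, (norm_add_single _ a).1 rfl]
    · simp
    · simp [Ne.symm hab]
  obtain ⟨s, hs⟩ := star (by omega) P Q hPQ (by
    intro a b hab
    rw [← pair_meet _ _ _ _ (hPQ a), ← flip hn _ _ _ _ (hPQ b), ← hg a, ← hg b]
    · have h1 := hR (T a) (T b) (TE a) (TE b)
      have h2 := hR0 (T a) (TE a)
      have h3 := hTT a b hab
      have h4 := norm_T a
      simp only [hT] at *
      unfold R at *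
      omega
    · rw [← hg a]; exact gE _ (TE a))
  have hπ : ∀ a, ∃ v, v ≠ s ∧ g (T a) = B s + B v := by
    intro a
    rcases hs a with h | h
    · exact ⟨Q a, by rw [h]; exact (hPQ a).symm, by rw [hg a, h]⟩
    · exact ⟨P a, by rw [h]; exact (hPQ a), by rw [hg a, h, add_comm]⟩
  choose π hπs hπ using hπ
  have Binj : ∀ a b : Fin n, T a = T b → a = b := by
    intro a b hab
    by_contra hne
    have := hTT a b hne
    rw [hab, w_add_self] at this
    simp at this
  have πinj : Function.Injective π := by
    intro a b hab
    apply Binj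
    apply ginj
    rw [hπ, hπ, hab]
  have key : ∀ x, Even (hammingNorm x) → ∀ a, x a = ext (g x) s + ext (g x) (π a) := by
    intro x hx a
    have h1 := flip hn x hx none (some a) (by simp)
    have h2 := flip hn (g x) (gE x hx) s (π a) (hπs a).symm
    rw [← hπ] at h2
    have h3 := hR x (T a) hx (TE a)
    have h4 := hR0 x hx
    have : (ext x none ≠ ext x (some a)) ↔ (ext (g x) s ≠ ext (g x) (π a)) := by
      rw [← h1, ← h2]
      have l1 := norm_le x
      have l2 := norm_le (x + T a)
      have l3 := norm_le (g x)
      have l4 := norm_le (g x + g (T a))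
      simp only [hT] at *
      unfold R at *
      omega
    rw [ne_iff_add, ne_iff_add] at this
    have e : ext x none + ext x (some a) = x a := by simp [ext]
    rw [e] at this
    generalize ext (g x) s + ext (g x) (π a) = c at this
    generalize x a = b at this
    revert this
    clear * -
    revert b c
    decide
  have πsurj : ∀ t, t ≠ s → ∃ a, π a = t := by
    intro t ht
    have hsub : Finset.univ.image π ⊆ Finset.univ.erase s := by
      intro u hu
      simp only [Finset.mem_image, Finset.mem_univ, true_and] at hu
      obtain ⟨a, rfl⟩ := hu
      simp [hπs a]
    have hc : (Finset.univ.erase s).card ≤ (Finset.univ.image π).card := by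
      rw [Finset.card_image_of_injective _ πinj, Finset.card_erase_of_mem (Finset.mem_univ _)]
      simp
    have := Finset.eq_of_subset_of_card_le hsub hc
    have ht' : t ∈ Finset.univ.image π := by rw [this]; simp [ht]
    simpa using ht'
  rcases s with _ | j
  · left
    have hq : ∀ a, ∃ k, π a = some k := by
      intro a
      exact Option.ne_none_iff_exists'.1 (hπs a)
    choose q hq using hq
    have qinj : Function.Injective q := by
      intro a b hab
      apply πinj; rw [hq, hq, hab]
    refine ⟨Equiv.ofBijective q (Finite.injective_iff_bijective.1 qinj), ?_⟩
    intro x hx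
    funext k
    obtain ⟨a, rfl⟩ := (Finite.injective_iff_surjective.1 qinj) k
    rw [Equiv.ofBijective_symm_apply_apply, key x hx a, hq]
    simp [ext]
  · right
    obtain ⟨i, hi⟩ := πsurj none (by simp)
    have hq : ∀ a : {k : Fin n // k ≠ i}, ∃ k : {k : Fin n // k ≠ j}, π a.1 = some k.1 := by
      rintro ⟨a, ha⟩
      have : π a ≠ none := by
        intro h; exact ha (πinj (h.trans hi.symm))
      obtain ⟨k, hk⟩ := Option.ne_none_iff_exists'.1 this
      refine ⟨⟨k, ?_⟩, hk⟩
      rintro rfl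
      exact hπs a hk
    choose q hq using hq
    have qb : Function.Bijective q := by
      constructor
      · intro a b hab
        apply Subtype.ext
        apply πinj; rw [hq, hq, hab]
      · rintro ⟨k, hk⟩
        obtain ⟨a, ha⟩ := πsurj (some k) (by simpa using hk)
        have hai : a ≠ i := by
          rintro rfl
          rw [hi] at ha; simp at ha
        refine ⟨⟨a, hai⟩, ?_⟩
        apply Subtype.ext
        have := hq ⟨a, hai⟩
        simp only at this
        rw [ha] at this
        exact (Option.some.inj this).symm
    refine ⟨i, j, Equiv.ofBijective q qb, ?_⟩
    intro x hx
    have hj : g x j = x i := by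
      rw [key x hx i, hi]; simp [ext]
    funext k
    unfold sigmaMap
    split_ifs with h
    · rw [h, hj]
    · obtain ⟨a, ha⟩ := qb.2 ⟨k, h⟩
      rw [← ha, Equiv.ofBijective_symm_apply_apply, key x hx a.1, hq, ha]
      simp only [ext]
      rw [hj, add_comm, ← add_assoc, CharTwo.add_self_eq_zero, zero_add]

/-! Counting -/

lemma cb_step (k q : ℕ) (h : k < q) :
    Nat.centralBinom (k + 1) * Nat.centralBinom q < Nat.centralBinom k * Nat.centralBinom (q + 1) := by
  have h1 := Nat.succ_mul_centralBinom_succ k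
  have h2 := Nat.succ_mul_centralBinom_succ q
  have p1 := Nat.centralBinom_pos k
  have p2 := Nat.centralBinom_pos q
  have pp := Nat.mul_pos p1 p2
  have : (k + 1) * (q + 1) * (Nat.centralBinom (k + 1) * Nat.centralBinom q)
      < (k + 1) * (q + 1) * (Nat.centralBinom k * Nat.centralBinom (q + 1)) := by
    calc (k + 1) * (q + 1) * (Nat.centralBinom (k + 1) * Nat.centralBinom q)
        = ((k + 1) * Nat.centralBinom (k + 1)) * (q + 1) * Nat.centralBinom q := by ring
      _ = (2 * (2 * k + 1) * (q + 1)) * (Nat.centralBinom k * Nat.centralBinom q) := by rw [h1]; ring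
      _ < (2 * (2 * q + 1) * (k + 1)) * (Nat.centralBinom k * Nat.centralBinom q) := by
          apply Nat.mul_lt_mul_of_pos_right _ pp
          nlinarith
      _ = ((q + 1) * Nat.centralBinom (q + 1)) * (k + 1) * Nat.centralBinom k := by rw [h2]; ring
      _ = _ := by ring
  exact lt_of_mul_lt_mul_left this (Nat.zero_le _)

lemma cb_lt (t : ℕ) : ∀ j q : ℕ, j + t + 1 ≤ q →
    Nat.centralBinom (j + t + 1) * Nat.centralBinom q <
      Nat.centralBinom j * Nat.centralBinom (q + t + 1) := by
  induction t with
  | zero => intro j q h; exact cb_step j q (by omega)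
  | succ t ih =>
    intro j q h
    have h1 := cb_step (j + t + 1) q (by omega)
    have h2 := ih j (q + 1) (by omega)
    have e : q + 1 + t + 1 = q + (t + 1) + 1 := by omega
    rw [e] at h2
    exact h1.trans h2

lemma cb_inj (p j k : ℕ) (hj : j ≤ p) (hk : k ≤ p)
    (h : Nat.centralBinom j * Nat.centralBinom (p - j) =
      Nat.centralBinom k * Nat.centralBinom (p - k)) : j = k ∨ j + k = p := by
  have aux : ∀ a b c d : ℕ, a < b → b ≤ c → a + d = b + c →
      Nat.centralBinom b * Nat.centralBinom c < Nat.centralBinom a * Nat.centralBinom d := by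
    intro a b c d h1 h2 h3
    have := cb_lt (b - a - 1) a c (by omega)
    have e1 : a + (b - a - 1) + 1 = b := by omega
    have e2 : c + (b - a - 1) + 1 = d := by omega
    rwa [e1, e2] at this
  by_contra hcon
  push Not at hcon
  have c1 := mul_comm (Nat.centralBinom j) (Nat.centralBinom (p - j))
  have c2 := mul_comm (Nat.centralBinom k) (Nat.centralBinom (p - k))
  rcases le_total j (p - j) with hj1 | hj1 <;> rcases le_total k (p - k) with hk1 | hk1
  · rcases lt_or_gt_of_ne hcon.1 with hl | hl
    · have := aux j k (p - k) (p - j) hl hk1 (by omega); omega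
    · have := aux k j (p - j) (p - k) hl hj1 (by omega); omega
  · rcases lt_or_ge j (p - k) with hl | hl
    · have := aux j (p - k) k (p - j) hl hk1 (by omega); omega
    · have := aux (p - k) j (p - j) k (by omega) hj1 (by omega); omega
  · rcases lt_or_ge (p - j) k with hl | hl
    · have := aux (p - j) k (p - k) j hl hk1 (by omega); omega
    · have := aux k (p - j) j (p - k) (by omega) hj1 (by omega); omega
  · rcases lt_or_gt_of_ne hcon.1 with hl | hl
    · have := aux (p - k) (p - j) j k (by omega) hj1 (by omega); omega
    · have := aux (p - j) (p - k) k j (by omega) hk1 (by omega); omega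

/-- common neighbours -/
def cn {n : ℕ} (p : ℕ) (x y : W n) : Finset (W n) :=
  Finset.univ.filter (fun z => hammingDist x z = p ∧ hammingDist y z = p)

/-- support -/
def S {n : ℕ} (x : W n) : Finset (Fin n) := Finset.univ.filter (fun i => x i ≠ 0)

lemma norm_S {n : ℕ} (x : W n) : hammingNorm x = (S x).card := rfl

/-- indicator -/
def ind {n : ℕ} (s : Finset (Fin n)) : W n := fun i => if i ∈ s then 1 else 0

lemma S_ind {n : ℕ} (s : Finset (Fin n)) : S (ind s) = s := by
  ext i; simp [S, ind]

lemma ind_S {n : ℕ} (x : W n) : ind (S x) = x := by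
  funext i
  rcases z2 (x i) with h | h <;> simp [S, ind, h]

lemma S_add {n : ℕ} (x y : W n) : S (x + y) = (S x \ S y) ∪ (S y \ S x) := by
  ext i
  simp only [S, Finset.mem_union, Finset.mem_sdiff, Finset.mem_filter, Finset.mem_univ, true_and,
    Pi.add_apply]
  rcases z2 (x i) with h | h <;> rcases z2 (y i) with h' | h' <;> rw [h, h'] <;> decide

lemma norm_add_S {n : ℕ} (x y : W n) :
    hammingNorm (x + y) = (S x \ S y).card + (S y \ S x).card := by
  rw [norm_S, S_add, Finset.card_union_of_disjoint]
  exact Finset.disjoint_left.2 (by intro a; simp; tauto)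

lemma cn_zero {n : ℕ} (p k : ℕ) (w : W n) (hw : hammingNorm w = 2 * k) (hk : k ≤ p) :
    (cn p 0 w).card = (2 * k).choose k * (n - 2 * k).choose (p - k) := by
  have h1 : ((S w).powersetCard k ×ˢ (S w)ᶜ.powersetCard (p - k)).card =
      (2 * k).choose k * (n - 2 * k).choose (p - k) := by
    rw [Finset.card_product, Finset.card_powersetCard, Finset.card_powersetCard,
      Finset.card_compl, Fintype.card_fin, ← norm_S, hw]
  rw [← h1]
  apply Finset.card_nbij' (fun z => (S z ∩ S w, S z \ S w)) (fun st => ind (st.1 ∪ st.2))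
  · intro z hz
    simp only [cn, Finset.coe_filter, Finset.mem_univ, true_and, Set.mem_ofPred_eq, dist_eq,
      zero_add] at hz
    obtain ⟨hz1, hz2⟩ := hz
    rw [norm_add_S] at hz2
    rw [norm_S] at hz1 hw
    have a1 := Finset.card_sdiff_add_card_inter (S z) (S w)
    have a2 := Finset.card_sdiff_add_card_inter (S w) (S z)
    rw [Finset.inter_comm] at a2
    simp only [Finset.coe_product, Set.mem_prod, Finset.mem_coe, Finset.mem_powersetCard]
    refine ⟨⟨Finset.inter_subset_right, by omega⟩, ?_, by omega⟩
    intro a; simp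
  · rintro ⟨s, t⟩ hst
    simp only [Finset.coe_product, Set.mem_prod, Finset.mem_coe, Finset.mem_powersetCard] at hst
    obtain ⟨⟨hs, hsk⟩, ht, htk⟩ := hst
    have hdis : Disjoint s t := by
      rw [Finset.disjoint_left]
      intro a ha hb
      exact (Finset.mem_compl.1 (ht hb)) (hs ha)
    have e1 : S w \ (s ∪ t) = S w \ s := by
      ext a
      have := @ht a
      simp at this ⊢; tauto
    have e2 : (s ∪ t) \ S w = t := by
      ext a
      have := @ht a
      have := @hs a
      simp at *; tauto
    simp only [cn, Finset.coe_filter, Finset.mem_univ, true_and, Set.mem_ofPred_eq, dist_eq, zero_add]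
    rw [norm_add_S, norm_S, S_ind, e1, e2, Finset.card_union_of_disjoint hdis,
      Finset.card_sdiff_of_subset hs, ← norm_S, hw]
    omega
  · intro z _
    simp only
    rw [Finset.union_comm, Finset.sdiff_union_inter, ind_S]
  · rintro ⟨s, t⟩ hst
    simp only [Finset.coe_product, Set.mem_prod, Finset.mem_coe, Finset.mem_powersetCard] at hst
    obtain ⟨⟨hs, hsk⟩, ht, htk⟩ := hst
    simp only [S_ind, Prod.mk.injEq]
    constructor
    · ext a
      have := @ht a
      have := @hs a
      simp at *; tauto
    · ext a
      have := @ht a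
      have := @hs a
      simp at *; tauto

lemma cn_translate {n : ℕ} (p : ℕ) (x y : W n) : (cn p x y).card = (cn p 0 (x + y)).card := by
  apply Finset.card_nbij' (fun z => z + x) (fun z => z + x)
  · intro z hz
    simp only [cn, Finset.coe_filter, Finset.mem_univ, true_and, Set.mem_ofPred_eq, dist_eq,
      zero_add] at hz ⊢
    rw [add_comm z x]
    refine ⟨hz.1, ?_⟩
    rw [← hz.2]
    congr 1
    calc x + y + (x + z) = (x + x) + (y + z) := by abel
      _ = y + z := by rw [w_add_self, zero_add]
  · intro z hz
    simp only [cn, Finset.coe_filter, Finset.mem_univ, true_and, Set.mem_ofPred_eq, dist_eq,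
      zero_add] at hz ⊢
    rw [add_comm z x, ← add_assoc, w_add_self, zero_add]
    refine ⟨hz.1, ?_⟩
    rw [← hz.2]
    congr 1
    abel
  · intro z _
    simp only [add_assoc, w_add_self, add_zero]
  · intro z _
    simp only [add_assoc, w_add_self, add_zero]

lemma cn_count {n p k : ℕ} (hn : n + 1 = 2 * p) (x y : W n) (h : hammingNorm (x + y) = 2 * k) :
    2 * (cn p x y).card = Nat.centralBinom k * Nat.centralBinom (p - k) := by
  have hl := norm_le (x + y)
  have hk : k < p := by omega
  rw [cn_translate, cn_zero p k _ h hk.le]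
  obtain ⟨r, rfl⟩ : ∃ r, p = k + r + 1 := ⟨p - k - 1, by omega⟩
  have e1 : n - 2 * k = 2 * r + 1 := by omega
  have e2 : k + r + 1 - k = r + 1 := by omega
  rw [e1, e2]
  have : Nat.centralBinom (r + 1) = 2 * (2 * r + 1).choose (r + 1) := by
    rw [Nat.centralBinom_eq_two_mul_choose]
    have : 2 * (r + 1) = (2 * r + 1) + 1 := by ring
    rw [this, Nat.choose_succ_succ, Nat.choose_symm_half]
    ring
  rw [this, Nat.centralBinom_eq_two_mul_choose]
  ring

lemma iso_iff {n p : ℕ} (φ : W n → W n) (hbij : Function.Bijective φ)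
    (hφ : ∀ x y, hammingDist x y = p → hammingDist (φ x) (φ y) = p) (x y : W n) :
    hammingDist (φ x) (φ y) = p ↔ hammingDist x y = p := by
  refine ⟨fun h => ?_, hφ x y⟩
  let A : Finset (W n × W n) := Finset.univ.filter (fun q => hammingDist q.1 q.2 = p)
  have hinj : Function.Injective (Prod.map φ φ) := hbij.1.prodMap hbij.1
  have hsub : A.image (Prod.map φ φ) ⊆ A := by
    intro q hq
    simp only [A, Finset.mem_image, Finset.mem_filter, Finset.mem_univ, true_and] at hq ⊢
    obtain ⟨r, hr, rfl⟩ := hq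
    exact hφ _ _ hr
  have heq := Finset.eq_of_subset_of_card_le hsub (by rw [Finset.card_image_of_injective _ hinj])
  have hm : (φ x, φ y) ∈ A.image (Prod.map φ φ) := by
    rw [heq]; simp [A, h]
  obtain ⟨r, hr, hr2⟩ := Finset.mem_image.1 hm
  have : r = (x, y) := hinj hr2
  subst this
  simpa [A] using hr

lemma cn_pres {n p : ℕ} (φ : W n → W n) (hbij : Function.Bijective φ)
    (hφ : ∀ x y, hammingDist x y = p → hammingDist (φ x) (φ y) = p) (x y : W n) :
    (cn p (φ x) (φ y)).card = (cn p x y).card := by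
  rw [← Finset.card_image_of_injective (cn p x y) hbij.1]
  congr 1
  ext z
  obtain ⟨w, rfl⟩ := hbij.2 z
  rw [Function.Injective.mem_finset_image hbij.1]
  simp only [cn, Finset.mem_filter, Finset.mem_univ, true_and, iso_iff φ hbij hφ]

lemma R_pres {n p : ℕ} (hn : n + 1 = 2 * p) (φ : W n → W n) (hbij : Function.Bijective φ)
    (hφ : ∀ x y, hammingDist x y = p → hammingDist (φ x) (φ y) = p) (x y : W n)
    (he : Even (hammingNorm (x + y))) :
    R n (hammingNorm (x + y)) (hammingNorm (φ x + φ y)) := by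
  obtain ⟨k, hk⟩ := he
  have hk : hammingNorm (x + y) = 2 * k := by omega
  have h1 := cn_count hn x y hk
  have h2 := cn_pres φ hbij hφ x y
  have hpos : 0 < (cn p (φ x) (φ y)).card := by
    have := Nat.mul_pos (Nat.centralBinom_pos k) (Nat.centralBinom_pos (p - k))
    omega
  obtain ⟨z, hz⟩ := Finset.card_pos.1 hpos
  simp only [cn, Finset.mem_filter, Finset.mem_univ, true_and, dist_eq] at hz
  have he : Even (hammingNorm (φ x + φ y)) := by
    have : φ x + φ y = (φ x + z) + (φ y + z) := by
      calc φ x + φ y = φ x + φ y + (z + z) := by rw [w_add_self, add_zero]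
        _ = _ := by abel
    rw [this, even_add, hz.1, hz.2]
  obtain ⟨j, hj⟩ := he
  have hj : hammingNorm (φ x + φ y) = 2 * j := by omega
  have h3 := cn_count hn (φ x) (φ y) hj
  rw [h2, h1] at h3
  have l1 := norm_le (x + y)
  have l2 := norm_le (φ x + φ y)
  have := cb_inj p k j (by omega) (by omega) h3
  unfold R
  omega

lemma dist_perm {n : ℕ} (π : Equiv.Perm (Fin n)) (a x y : W n) :
    hammingDist ((fun k => x (π.symm k)) + a) ((fun k => y (π.symm k)) + a) = hammingDist x y := by
  unfold hammingDist
  apply Finset.card_equiv π.symm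
  intro i
  simp

lemma bij_perm {n : ℕ} (π : Equiv.Perm (Fin n)) (a : W n) :
    Function.Bijective (fun x : W n => (fun k => x (π.symm k)) + a) := by
  apply Finite.injective_iff_bijective.1
  intro x y h
  have h2 := dist_perm π a x y
  simp only at h
  rw [h, hammingDist_self] at h2
  exact hammingDist_eq_zero.1 h2.symm

lemma sigma_add {n : ℕ} (i j : Fin n) (σ : {k : Fin n // k ≠ i} ≃ {k : Fin n // k ≠ j})
    (x y : W n) : sigmaMap n i j σ (x + y) = sigmaMap n i j σ x + sigmaMap n i j σ y := by
  funext k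
  simp only [sigmaMap, Pi.add_apply]
  split_ifs
  · rfl
  · ring

lemma sigma_one {n : ℕ} (i j : Fin n) (σ : {k : Fin n // k ≠ i} ≃ {k : Fin n // k ≠ j}) :
    sigmaMap n i j σ 1 = 0 + Pi.single j 1 := by
  have h11 : (1 : ZMod 2) + 1 = 0 := by decide
  funext k
  by_cases h : k = j <;> simp [sigmaMap, h, h11]

end CubeIso

open CubeIso
/-- For `n ≡ 3 (mod 4)`: every `(n+1)/2`-isometry of `C_n` fixing `0̄` that is not an even
isometry either (I) acts as an even isometry on the even-weight words and as
`T_a ∘ τ` (with `τ` a `σ_{i,j}`-mapping and `a` of even weight) on the odd-weight words,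
or (II) acts as a `σ_{i,j}`-mapping on the even-weight words and as an even isometry on
the odd-weight words, or (III) acts as a `σ_{i,j}`-mapping `τ₁` on the even-weight words
and as `T_a ∘ τ₂` (with `τ₂` a `σ_{k,l}`-mapping and `a` of even weight) on the
odd-weight words. -/
theorem halfPlusOneIsometry_classification_three_mod_four (n : ℕ) (hn : n % 4 = 3)
    (φ : (Fin n → ZMod 2) → Fin n → ZMod 2)
    (hbij : Function.Bijective φ) (h0 : φ 0 = 0)
    (hφ : ∀ x y, hammingDist x y = (n + 1) / 2 →
      hammingDist (φ x) (φ y) = (n + 1) / 2)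
    (hne : ¬(∀ x y, Even (hammingDist x y) →
      hammingDist (φ x) (φ y) = hammingDist x y)) :
    -- Case I
    (∃ ψ : (Fin n → ZMod 2) → Fin n → ZMod 2,
      (Function.Bijective ψ ∧ ∀ x y, Even (hammingDist x y) →
        hammingDist (ψ x) (ψ y) = hammingDist x y) ∧
      (∀ c, Even (hammingNorm c) → φ c = ψ c) ∧
      ∃ (i j : Fin n) (σ : {k : Fin n // k ≠ i} ≃ {k : Fin n // k ≠ j})
        (a : Fin n → ZMod 2), Even (hammingNorm a) ∧
        ∀ c, Odd (hammingNorm c) → φ c = sigmaMap n i j σ c + a) ∨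
    -- Case II
    (∃ (i j : Fin n) (σ : {k : Fin n // k ≠ i} ≃ {k : Fin n // k ≠ j}),
      (∀ c, Even (hammingNorm c) → φ c = sigmaMap n i j σ c) ∧
      ∃ ψ : (Fin n → ZMod 2) → Fin n → ZMod 2,
        (Function.Bijective ψ ∧ ∀ x y, Even (hammingDist x y) →
          hammingDist (ψ x) (ψ y) = hammingDist x y) ∧
        ∀ c, Odd (hammingNorm c) → φ c = ψ c) ∨
    -- Case III
    (∃ (i j : Fin n) (σ₁ : {k : Fin n // k ≠ i} ≃ {k : Fin n // k ≠ j})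
        (k l : Fin n) (σ₂ : {m : Fin n // m ≠ k} ≃ {m : Fin n // m ≠ l})
        (a : Fin n → ZMod 2), Even (hammingNorm a) ∧
      (∀ c, Even (hammingNorm c) → φ c = sigmaMap n i j σ₁ c) ∧
      (∀ c, Odd (hammingNorm c) → φ c = sigmaMap n k l σ₂ c + a)) := by

  obtain ⟨m, hm⟩ : ∃ m, n = 4 * m + 3 := ⟨n / 4, by omega⟩
  have hp : n + 1 = 2 * ((n + 1) / 2) := by omega
  rcases Nat.eq_zero_or_pos m with rfl | hmpos
  · exfalso
    apply hne
    intro x y hxy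
    have h3 := norm_le (x + y)
    rw [← dist_eq] at h3
    obtain ⟨r, hr⟩ := hxy
    rcases Nat.eq_zero_or_pos r with rfl | hr0
    · have : x = y := hammingDist_eq_zero.1 (by omega)
      rw [this]; simp
    · rw [hφ x y (by omega)]; omega
  generalize hpp : (n + 1) / 2 = p at hp hφ
  have hR := R_pres hp φ hbij hφ
  have n1 : ¬ Even (hammingNorm (1 : W n)) := by
    rw [w_norm_one, Nat.not_even_iff]; omega
  have gE : ∀ x, Even (hammingNorm x) → Even (hammingNorm (φ x)) := by
    intro x hx
    have := hR x 0 (by simpa using hx)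
    rw [h0, add_zero, add_zero] at this
    unfold R at this
    obtain ⟨r, hr⟩ := hx
    rw [Nat.even_iff]; omega
  have hφ1 : ¬ Even (hammingNorm (φ 1)) := by
    intro h1
    let A : Finset (W n) := Finset.univ.filter (fun x => Even (hammingNorm x))
    have hsub : A.image φ ⊆ A := by
      intro q hq
      simp only [A, Finset.mem_image, Finset.mem_filter, Finset.mem_univ, true_and] at hq ⊢
      obtain ⟨r, hr, rfl⟩ := hq
      exact gE _ hr
    have heq := Finset.eq_of_subset_of_card_le hsub
      (by rw [Finset.card_image_of_injective _ hbij.1])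
    have hm : φ 1 ∈ A.image φ := by
      rw [heq]; simp [A, h1]
    rw [Function.Injective.mem_finset_image hbij.1] at hm
    exact n1 (by simpa [A] using hm)
  have hE := main hm hmpos φ h0 hbij.1 (fun x y hx hy => hR x y (by rw [even_add]; tauto))
  have hO := main hm hmpos (fun x => φ (x + 1) + φ 1) (by simp [w_add_self])
    (by
      intro x y hxy
      simp only [add_left_inj] at hxy
      simpa using hbij.1 hxy)
    (by
      intro x y hx hy
      have e1 : φ (x + 1) + φ 1 + (φ (y + 1) + φ 1) = φ (x + 1) + φ (y + 1) := by
        calc _ = φ (x + 1) + φ (y + 1) + (φ 1 + φ 1) := by abel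
          _ = _ := by rw [w_add_self, add_zero]
      have e2 : x + y = (x + 1) + (y + 1) := by
        calc x + y = x + y + (1 + 1) := by rw [w_add_self, add_zero]
          _ = _ := by abel
      rw [e1, e2]
      apply hR
      rw [← e2, even_add]; tauto)
  have hO' : ∀ f : W n → W n, (∀ x, Even (hammingNorm x) → φ (x + 1) + φ 1 = f x) →
      (∀ x y, f (x + y) = f x + f y) → ∀ c, Odd (hammingNorm c) → φ c = f c + (f 1 + φ 1) := by
    intro f hf hadd c hc
    have hc' : Even (hammingNorm (c + 1)) := by
      rw [even_add]
      have := Nat.not_even_iff_odd.2 hc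
      tauto
    have := hf (c + 1) hc'
    rw [add_assoc, w_add_self, add_zero, hadd] at this
    rw [← add_assoc, ← this, add_assoc, w_add_self, add_zero]
  rcases hE with ⟨π, hE⟩ | ⟨i, j, σ, hE⟩ <;> rcases hO with ⟨π₂, hO⟩ | ⟨k, l, σ₂, hO⟩
  · exfalso
    apply hne
    have hO := hO' _ hO (fun x y => rfl)
    intro x y hxy
    rw [dist_eq, even_add] at hxy
    by_cases hx : Even (hammingNorm x)
    · have hy := hxy.1 hx
      have := dist_perm π 0 x y
      rw [hE x hx, hE y hy]
      simpa using this
    · have hy : ¬ Even (hammingNorm y) := fun h => hx (hxy.2 h)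
      rw [hO x (Nat.not_even_iff_odd.1 hx), hO y (Nat.not_even_iff_odd.1 hy)]
      exact dist_perm π₂ _ x y
  · left
    have hO := hO' _ hO (sigma_add k l σ₂)
    refine ⟨fun x => (fun k => x (π.symm k)) + 0, ⟨bij_perm π 0, fun x y _ => dist_perm π 0 x y⟩,
      fun c hc => by rw [hE c hc]; exact (add_zero _).symm, k, l, σ₂, _, ?_, hO⟩
    rw [even_add, sigma_one, (norm_add_single (0 : W n) l).1 rfl]
    simpa using hφ1
  · right; left
    have hO := hO' _ hO (fun x y => rfl)
    exact ⟨i, j, σ, hE, _, ⟨bij_perm π₂ _, fun x y _ => dist_perm π₂ _ x y⟩, hO⟩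
  · right; right
    have hO := hO' _ hO (sigma_add k l σ₂)
    refine ⟨i, j, σ, k, l, σ₂, _, ?_, hE, hO⟩
    rw [even_add, sigma_one, (norm_add_single (0 : W n) l).1 rfl]
    simpa using hφ1
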